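/- Let κ ≥ 2 and A ≥ q be integers and let a = (a_n)_{n≥1} be a sequence over F_q[T] with q ≤ |a_n| ≤ A for all n ≥ 1. Assume there exists an integer n_0 ≥ 1 such that p(a, n) ≤ κn for all n ≥ n_0, and that the Diophantine exponent Dio(a) is finite. Set ξ := [0, a_1, a_2, …] ∈ F_q((T^{-1})) and let (p_n/q_n) be its convergents. Then w_2(ξ) ≤ 128(2κ+1)^3 · Dio(a) · (log A / log q)^4. Moreover, if the sequence (|q_n|^{1/n})_{n≥1} converges, then w_2(ξ) ≤ 64(2κ+1)^3 · Dio(a). -/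

import Mathlib

open Polynomial Filter
open scoped ENNReal

noncomputable section

namespace Ooto

variable (Fq : Type) [Field Fq] [Fintype Fq]

/-- `F_q((T⁻¹))`, realized as formal Laurent series in the variable `X = T⁻¹`. -/
abbrev K := LaurentSeries Fq

/-- The element `T = X⁻¹` of `F_q((T⁻¹))`. -/
def TT : K Fq := HahnSeries.single (-1 : ℤ) (1 : Fq)

/-- The natural embedding of `F_q[T]` into `F_q((T⁻¹))`, sending `T` to `T`. -/
def polyToK : Polynomial Fq →+* K Fq := Polynomial.eval₂RingHom HahnSeries.C (TT Fq)

open Classical in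
/-- The absolute value on `F_q((T⁻¹))`: `|0| = 0` and `|ξ| = q^{-N}` where `N` is the order
of `ξ` as a series in `T⁻¹`. -/
def kabs (f : K Fq) : ℝ := if f = 0 then 0 else (Fintype.card Fq : ℝ) ^ (-f.order)

/-- A fixed algebraic closure of `F_q((T⁻¹))`. -/
abbrev L := AlgebraicClosure (K Fq)

def toL : K Fq →+* L Fq := algebraMap (K Fq) (L Fq)

def φ : Polynomial Fq →+* L Fq := (toL Fq).comp (polyToK Fq)

/-- Evaluation of `P ∈ (F_q[T])[X]` at `ξ ∈ F_q((T⁻¹))`. -/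
def evalK (P : Polynomial (Polynomial Fq)) (ξ : K Fq) : K Fq :=
  Polynomial.eval₂ (polyToK Fq) ξ P

/-- Evaluation of `P ∈ (F_q[T])[X]` at a point of the algebraic closure. -/
def evalL (P : Polynomial (Polynomial Fq)) (α : L Fq) : L Fq :=
  Polynomial.eval₂ (φ Fq) α P

/-- Height of a polynomial over `F_q[T]`: the maximum of the absolute values of its
coefficients. -/
def Hpoly (P : Polynomial (Polynomial Fq)) : ℝ := ⨆ i : ℕ, kabs Fq (polyToK Fq (P.coeff i))

/-- `P` is the minimal polynomial of `α`: a non-constant irreducible primitive polynomial in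
`(F_q[T])[X]` whose leading coefficient is monic in `T`, vanishing at `α`. -/
def IsMinPolyOf (P : Polynomial (Polynomial Fq)) (α : L Fq) : Prop :=
  0 < P.natDegree ∧ Irreducible P ∧ P.IsPrimitive ∧ (P.leadingCoeff).Monic ∧ evalL Fq P α = 0

/-- `α` is algebraic over `F_q(T)`. -/
def IsAlgElem (α : L Fq) : Prop := ∃ P, IsMinPolyOf Fq P α

open Classical in
/-- The minimal polynomial of an algebraic element (junk value `0` otherwise). -/
def minPolyPrim (α : L Fq) : Polynomial (Polynomial Fq) :=
  if h : IsAlgElem Fq α then h.choose else 0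

/-- Degree of an algebraic element. -/
def degAlg (α : L Fq) : ℕ := (minPolyPrim Fq α).natDegree

/-- Height of an algebraic element. -/
def heightAlg (α : L Fq) : ℝ := Hpoly Fq (minPolyPrim Fq α)

/-- Inseparable degree of a polynomial `P ∈ (F_q[T])[X]`: the largest power `f = p^j` of the
characteristic such that `P(X) = R(X^f)` for some `R`. -/
def insepDeg (P : Polynomial (Polynomial Fq)) : ℕ :=
  (ringChar Fq) ^ sSup {j : ℕ | ∃ R : Polynomial (Polynomial Fq),
    P = R.comp (Polynomial.X ^ (ringChar Fq) ^ j)}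

/-- Inseparable degree of an algebraic element. -/
def insepAlg (α : L Fq) : ℕ := insepDeg Fq (minPolyPrim Fq α)

/-- `α'` is the Galois conjugate of the quadratic element `α` (equal to `α` itself in the
inseparable case): the minimal polynomial of `α` factors as `A(X - α)(X - α')`. -/
def IsConjOf (α' α : L Fq) : Prop :=
  (minPolyPrim Fq α).natDegree = 2 ∧
  (minPolyPrim Fq α).map (φ Fq) =
    Polynomial.C (φ Fq (minPolyPrim Fq α).leadingCoeff) *
      (Polynomial.X - Polynomial.C α) * (Polynomial.X - Polynomial.C α')

/-- `v` is an absolute value on the algebraic closure of `F_q((T⁻¹))` extending `kabs`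
(such an extension exists and is unique). -/
structure IsAbsExt (v : L Fq → ℝ) : Prop where
  eq_zero_iff : ∀ x, v x = 0 ↔ x = 0
  map_mul : ∀ x y, v (x * y) = v x * v y
  add_le : ∀ x y, v (x + y) ≤ max (v x) (v y)
  nonneg : ∀ x, 0 ≤ v x
  extends_kabs : ∀ f : K Fq, v (toL Fq f) = kabs Fq f

/-- The exponent `w_n(ξ)`: the supremum of the real numbers `w` such that
`0 < |P(ξ)| ≤ H(P)^{-w}` for infinitely many `P ∈ (F_q[T])[X]` of degree at most `n`. -/
def wExp (n : ℕ) (ξ : K Fq) : EReal :=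
  sSup {x : EReal | ∃ w : ℝ, x = (w : EReal) ∧
    {P : Polynomial (Polynomial Fq) | P.natDegree ≤ n ∧ 0 < kabs Fq (evalK Fq P ξ) ∧
      kabs Fq (evalK Fq P ξ) ≤ Hpoly Fq P ^ (-w)}.Infinite}

/-- The exponent `w_n^*(ξ)`: the supremum of the real numbers `w` such that
`0 < |ξ - α| ≤ H(α)^{-w-1}` for infinitely many algebraic `α` of degree at most `n`. -/
def wStarExp (v : L Fq → ℝ) (n : ℕ) (ξ : K Fq) : EReal :=
  sSup {x : EReal | ∃ w : ℝ, x = (w : EReal) ∧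
    {α : L Fq | IsAlgElem Fq α ∧ degAlg Fq α ≤ n ∧ 0 < v (toL Fq ξ - α) ∧
      v (toL Fq ξ - α) ≤ heightAlg Fq α ^ (-w - 1)}.Infinite}

/-- `pSeq a n = p_{n-1}`, the numerators of the convergents of `[a 0; a 1, a 2, …]`
(with `p_{-1} = 1`). -/
def pSeq (a : ℕ → Polynomial Fq) : ℕ → Polynomial Fq
  | 0 => 1
  | 1 => a 0
  | (n+2) => a (n+1) * pSeq a (n+1) + pSeq a n

/-- `qSeq a n = q_{n-1}`, the denominators of the convergents of `[a 0; a 1, a 2, …]`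
(with `q_{-1} = 0`). -/
def qSeq (a : ℕ → Polynomial Fq) : ℕ → Polynomial Fq
  | 0 => 0
  | 1 => 1
  | (n+2) => a (n+1) * qSeq a (n+1) + qSeq a n

/-- `ξ` has continued fraction expansion `[a 0; a 1, a 2, …]`: each partial quotient `a n`
(`n ≥ 1`) has degree at least one and `|ξ - p_n/q_n| = |q_n|⁻¹|q_{n+1}|⁻¹` for all `n ≥ 0`. -/
def IsCFOf (ξ : K Fq) (a : ℕ → Polynomial Fq) : Prop :=
  (∀ n, 1 ≤ n → 1 ≤ (a n).natDegree) ∧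
  ∀ n : ℕ,
    kabs Fq (ξ - polyToK Fq (pSeq Fq a (n+1)) / polyToK Fq (qSeq Fq a (n+1))) =
      (kabs Fq (polyToK Fq (qSeq Fq a (n+1))) * kabs Fq (polyToK Fq (qSeq Fq a (n+2))))⁻¹

/-- The sequence of partial quotients of `[0; b 0, b 1, b 2, …]`. -/
def cfA (b : ℕ → Polynomial Fq) : ℕ → Polynomial Fq := fun n => if n = 0 then 0 else b (n - 1)

/-- `qden b n` is the denominator `q_n` of the `n`-th convergent of `[0; b 0, b 1, …]`. -/
def qden (b : ℕ → Polynomial Fq) (n : ℕ) : Polynomial Fq := qSeq Fq (cfA Fq b) (n + 1)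

/-- `V^w` for a finite word `V` and a real `w ≥ 0`: `⌊w⌋` copies of `V` followed by the prefix
of `V` of length `⌈(w - ⌊w⌋)|V|⌉`. -/
def wordPow {A : Type*} (V : List A) (w : ℝ) : List A :=
  (List.replicate ⌊w⌋₊ V).flatten ++ V.take ⌈(w - ⌊w⌋₊) * V.length⌉₊

/-- The finite word `l` is a prefix of the infinite word `b`. -/
def IsPrefixOfSeq {A : Type*} (l : List A) (b : ℕ → A) : Prop :=
  ∀ (i : ℕ) (h : i < l.length), l.get ⟨i, h⟩ = b i

/-- Condition `(*)_ρ` for an infinite word. -/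
def SatisfiesCond {A : Type*} (b : ℕ → A) (ρ : ℝ) : Prop :=
  ∃ (U V : ℕ → List A) (w : ℕ → ℝ),
    (∀ n, V n ≠ []) ∧ (∀ n, 0 ≤ w n) ∧
    (∀ n, IsPrefixOfSeq (U n ++ wordPow (V n) (w n)) b) ∧
    (∀ n, ρ * (((U n).length + (V n).length : ℕ) : ℝ) ≤
      (((U n).length + (wordPow (V n) (w n)).length : ℕ) : ℝ)) ∧
    StrictMono fun n => (wordPow (V n) (w n)).length

/-- The Diophantine exponent of an infinite word: the supremum of the `ρ` such that the word
satisfies Condition `(*)_ρ`. -/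
def dioExp {A : Type*} (b : ℕ → A) : EReal :=
  sSup {x : EReal | ∃ ρ : ℝ, x = (ρ : EReal) ∧ SatisfiesCond b ρ}

/-- The complexity function: the number of distinct blocks of `n` consecutive letters. -/
def complexity {A : Type*} (b : ℕ → A) (n : ℕ) : ℕ∞ :=
  {w : Fin n → A | ∃ i : ℕ, ∀ k : Fin n, w k = b (i + k)}.encard

/-- The infinite word `b` is ultimately periodic. -/
def UltimatelyPeriodic {A : Type*} (b : ℕ → A) : Prop :=
  ∃ N T : ℕ, 0 < T ∧ ∀ n, N ≤ n → b (n + T) = b n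


set_option linter.unusedSectionVars false

/-! ### Basic facts on the absolute value -/

lemma card_ge_two : (2 : ℝ) ≤ (Fintype.card Fq : ℝ) := by
  exact_mod_cast Fintype.one_lt_card (α := Fq)

lemma card_pos' : (0 : ℝ) < (Fintype.card Fq : ℝ) := by
  linarith [card_ge_two Fq]

lemma kabs_zero : kabs Fq 0 = 0 := by simp [kabs]

lemma kabs_nonneg (f : K Fq) : 0 ≤ kabs Fq f := by
  unfold kabs
  split_ifs
  · exact le_rfl
  · positivity

lemma kabs_pos {f : K Fq} (hf : f ≠ 0) : 0 < kabs Fq f := by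
  unfold kabs
  rw [if_neg hf]
  have := card_pos' Fq
  positivity

lemma kabs_ne_zero_of_pos {f : K Fq} (hf : 0 < kabs Fq f) : f ≠ 0 := by
  rintro rfl
  rw [kabs_zero] at hf
  exact lt_irrefl _ hf

lemma kabs_mul (f g : K Fq) : kabs Fq (f * g) = kabs Fq f * kabs Fq g := by
  by_cases hf : f = 0
  · simp [hf, kabs_zero]
  by_cases hg : g = 0
  · simp [hg, kabs_zero]
  unfold kabs
  rw [if_neg hf, if_neg hg, if_neg (mul_ne_zero hf hg), HahnSeries.order_mul hf hg, neg_add,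
    zpow_add₀ (card_pos' Fq).ne']

lemma kabs_neg (f : K Fq) : kabs Fq (-f) = kabs Fq f := by
  by_cases hf : f = 0
  · simp [hf]
  · unfold kabs
    rw [if_neg hf, if_neg (neg_ne_zero.2 hf), HahnSeries.order_neg]

lemma kabs_add_le (f g : K Fq) : kabs Fq (f + g) ≤ max (kabs Fq f) (kabs Fq g) := by
  by_cases hf : f = 0
  · simp [hf]
  by_cases hg : g = 0
  · simp [hg]
  by_cases hfg : f + g = 0
  · rw [hfg, kabs_zero]
    exact le_max_of_le_left (kabs_nonneg Fq f)
  unfold kabs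
  rw [if_neg hf, if_neg hg, if_neg hfg]
  have h := HahnSeries.min_order_le_order_add hfg
  have h1 : (1 : ℝ) ≤ Fintype.card Fq := by linarith [card_ge_two Fq]
  rcases min_le_iff.1 h with h | h
  · exact le_max_of_le_left (zpow_le_zpow_right₀ h1 (by omega))
  · exact le_max_of_le_right (zpow_le_zpow_right₀ h1 (by omega))

lemma kabs_add_le_of {f g : K Fq} {B : ℝ} (hf : kabs Fq f ≤ B) (hg : kabs Fq g ≤ B) :
    kabs Fq (f + g) ≤ B := (kabs_add_le Fq f g).trans (max_le hf hg)

lemma kabs_sub_le_of {f g : K Fq} {B : ℝ} (hf : kabs Fq f ≤ B) (hg : kabs Fq g ≤ B) :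
    kabs Fq (f - g) ≤ B := by
  rw [sub_eq_add_neg]
  exact kabs_add_le_of Fq hf (by rwa [kabs_neg])

lemma kabs_mul_le {f g : K Fq} {B C : ℝ} (hf : kabs Fq f ≤ B) (hg : kabs Fq g ≤ C) :
    kabs Fq (f * g) ≤ B * C := by
  rw [kabs_mul]
  exact mul_le_mul hf hg (kabs_nonneg _ _) ((kabs_nonneg _ _).trans hf)

lemma polyToK_coeff (p : Polynomial Fq) (z : ℤ) :
    (polyToK Fq p).coeff z = if z ≤ 0 then p.coeff (-z).toNat else 0 := by
  induction p using Polynomial.induction_on' with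
  | add p q hp hq =>
    rw [map_add, HahnSeries.coeff_add, hp, hq]
    split_ifs <;> simp
  | monomial n a =>
    have : polyToK Fq (Polynomial.monomial n a) = HahnSeries.single (-(n:ℤ)) a := by
      unfold polyToK TT
      simp only [Polynomial.coe_eval₂RingHom, Polynomial.eval₂_monomial]
      rw [HahnSeries.single_pow, HahnSeries.C_apply, HahnSeries.single_mul_single]
      simp
    rw [this, HahnSeries.coeff_single, Polynomial.coeff_monomial]
    split_ifs <;> first | rfl | (exfalso; omega)

lemma polyToK_injective : Function.Injective (polyToK Fq) := by
  rw [injective_iff_map_eq_zero]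
  intro p hp
  ext n
  have := polyToK_coeff Fq p (-(n:ℤ))
  rw [hp] at this
  simpa using this.symm

lemma polyToK_ne_zero {p : Polynomial Fq} (hp : p ≠ 0) : polyToK Fq p ≠ 0 := by
  rwa [Ne, map_eq_zero_iff _ (polyToK_injective Fq)]

lemma kabs_poly {p : Polynomial Fq} (hp : p ≠ 0) :
    kabs Fq (polyToK Fq p) = (Fintype.card Fq : ℝ) ^ p.natDegree := by
  have hne := polyToK_ne_zero Fq hp
  have : (polyToK Fq p).order = -(p.natDegree : ℤ) := by
    apply le_antisymm
    · apply HahnSeries.order_le_of_coeff_ne_zero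
      rw [polyToK_coeff]
      simp [hp]
    · by_contra! h
      have h2 : (polyToK Fq p).coeff (polyToK Fq p).order ≠ 0 := by
        exact HahnSeries.coeff_order_eq_zero.not.2 hne
      apply h2
      rw [polyToK_coeff, if_pos (by omega)]
      apply Polynomial.coeff_eq_zero_of_natDegree_lt
      omega
  unfold kabs
  rw [if_neg hne, this, neg_neg, zpow_natCast]

lemma one_le_kabs_poly {p : Polynomial Fq} (hp : p ≠ 0) : 1 ≤ kabs Fq (polyToK Fq p) := by
  rw [kabs_poly Fq hp]
  exact one_le_pow₀ (by linarith [card_ge_two Fq])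

lemma kabs_poly_le (p : Polynomial Fq) :
    kabs Fq (polyToK Fq p) ≤ (Fintype.card Fq : ℝ) ^ p.natDegree := by
  by_cases hp : p = 0
  · simp [hp, kabs_zero]
  · exact (kabs_poly Fq hp).le

lemma finite_natDegree_le (h : ℕ) : {p : Polynomial Fq | p.natDegree ≤ h}.Finite := by
  refine Set.Finite.of_injOn (f := fun (p : Polynomial Fq) (i : Fin (h + 1)) => p.coeff i)
    (t := Set.univ) (fun _ _ => Set.mem_univ _) ?_ Set.finite_univ
  intro p hp q hq hpq
  ext n
  by_cases hn : n < h + 1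
  · exact congrFun hpq ⟨n, hn⟩
  · simp only [Set.mem_ofPred_eq] at hp hq
    rw [Polynomial.coeff_eq_zero_of_natDegree_lt (by omega),
      Polynomial.coeff_eq_zero_of_natDegree_lt (by omega)]

lemma finite_polys (h : ℕ) : {P : Polynomial (Polynomial Fq) | P.natDegree ≤ 2 ∧
    ∀ i, (P.coeff i).natDegree ≤ h}.Finite := by
  refine Set.Finite.of_injOn
    (f := fun (P : Polynomial (Polynomial Fq)) (i : Fin 3) => P.coeff i)
    (t := Set.univ.pi fun _ => {p : Polynomial Fq | p.natDegree ≤ h})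
    (fun P hP i _ => hP.2 i) ?_ (Set.Finite.pi fun _ => finite_natDegree_le Fq h)
  intro p hp q hq hpq
  ext1 n
  by_cases hn : n < 3
  · exact congrFun hpq ⟨n, hn⟩
  · have h1 := hp.1
    have h2 := hq.1
    rw [Polynomial.coeff_eq_zero_of_natDegree_lt (by omega),
      Polynomial.coeff_eq_zero_of_natDegree_lt (by omega)]

/-- The height of a quadratic polynomial is `q^h` with `h` the maximal degree. -/
lemma Hpoly_eq (P : Polynomial (Polynomial Fq)) (hP : P ≠ 0) :
    ∃ h : ℕ, (∀ i, (P.coeff i).natDegree ≤ h) ∧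
      Hpoly Fq P = (Fintype.card Fq : ℝ) ^ h := by
  have hne : P.support.Nonempty := Polynomial.support_nonempty.2 hP
  obtain ⟨i, hi, hmax⟩ := Finset.exists_max_image P.support (fun i => (P.coeff i).natDegree) hne
  have hall : ∀ j, (P.coeff j).natDegree ≤ (P.coeff i).natDegree := by
    intro j
    by_cases hj : j ∈ P.support
    · exact hmax j hj
    · rw [Polynomial.notMem_support_iff.1 hj]
      simp
  have h1 : (1 : ℝ) ≤ Fintype.card Fq := by linarith [card_ge_two Fq]
  have hb : ∀ j, kabs Fq (polyToK Fq (P.coeff j)) ≤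
      (Fintype.card Fq : ℝ) ^ (P.coeff i).natDegree := fun j =>
    (kabs_poly_le Fq _).trans (pow_le_pow_right₀ h1 (hall j))
  refine ⟨_, hall, le_antisymm (ciSup_le hb) ?_⟩
  rw [← kabs_poly Fq (Polynomial.mem_support_iff.1 hi)]
  exact le_ciSup (f := fun j => kabs Fq (polyToK Fq (P.coeff j)))
    ⟨_, by rintro _ ⟨j, rfl⟩; exact hb j⟩ i

/-! ### Continued fractions -/

/-- The sum of the degrees of the first `m` partial quotients. -/
def sdeg (b : ℕ → Polynomial Fq) (m : ℕ) : ℕ := ∑ k ∈ Finset.range m, (b k).natDegree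

lemma sdeg_succ (b : ℕ → Polynomial Fq) (m : ℕ) :
    sdeg Fq b (m + 1) = sdeg Fq b m + (b m).natDegree := Finset.sum_range_succ _ _

lemma sdeg_mono (b : ℕ → Polynomial Fq) : Monotone (sdeg Fq b) :=
  monotone_nat_of_le_succ fun m => by rw [sdeg_succ]; omega

lemma cfA_succ (b : ℕ → Polynomial Fq) (n : ℕ) : cfA Fq b (n + 1) = b n := by simp [cfA]

lemma qSeq_rec (b : ℕ → Polynomial Fq) (n : ℕ) : qSeq Fq (cfA Fq b) (n + 2) =
    b n * qSeq Fq (cfA Fq b) (n + 1) + qSeq Fq (cfA Fq b) n := by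
  rw [qSeq, cfA_succ]

lemma pSeq_rec (b : ℕ → Polynomial Fq) (n : ℕ) : pSeq Fq (cfA Fq b) (n + 2) =
    b n * pSeq Fq (cfA Fq b) (n + 1) + pSeq Fq (cfA Fq b) n := by
  rw [pSeq, cfA_succ]

lemma qSeq_zero (b : ℕ → Polynomial Fq) : qSeq Fq (cfA Fq b) 0 = 0 := by simp [qSeq]
lemma qSeq_one (b : ℕ → Polynomial Fq) : qSeq Fq (cfA Fq b) 1 = 1 := by simp [qSeq]
lemma pSeq_zero (b : ℕ → Polynomial Fq) : pSeq Fq (cfA Fq b) 0 = 1 := by simp [pSeq]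
lemma pSeq_one (b : ℕ → Polynomial Fq) : pSeq Fq (cfA Fq b) 1 = 0 := by simp [pSeq, cfA]

lemma qSeq_degree (b : ℕ → Polynomial Fq) (hb : ∀ n, 1 ≤ (b n).natDegree) (m : ℕ) :
    (qSeq Fq (cfA Fq b) (m + 1) ≠ 0 ∧ (qSeq Fq (cfA Fq b) (m + 1)).natDegree = sdeg Fq b m) ∧
    (qSeq Fq (cfA Fq b) m).natDegree ≤ sdeg Fq b (m - 1) := by
  induction m with
  | zero => simp [qSeq_zero, qSeq_one, sdeg]
  | succ m ih =>
    obtain ⟨⟨h1, h2⟩, h3⟩ := ih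
    have hbm : b m ≠ 0 := by
      intro h
      have := hb m
      simp [h] at this
    have hd : (b m * qSeq Fq (cfA Fq b) (m + 1)).natDegree = sdeg Fq b (m + 1) := by
      rw [Polynomial.natDegree_mul hbm h1, h2, sdeg_succ, add_comm]
    have hlt : (qSeq Fq (cfA Fq b) m).natDegree <
        (b m * qSeq Fq (cfA Fq b) (m + 1)).natDegree := by
      rw [hd, sdeg_succ]
      have := sdeg_mono Fq b (Nat.sub_le m 1)
      have := hb m
      omega
    have hd2 : (qSeq Fq (cfA Fq b) (m + 2)).natDegree = sdeg Fq b (m + 1) := by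
      rw [qSeq_rec, Polynomial.natDegree_add_eq_left_of_natDegree_lt hlt, hd]
    refine ⟨⟨?_, hd2⟩, ?_⟩
    · intro h0
      have h0' : qSeq Fq (cfA Fq b) (m + 2) = 0 := h0
      rw [h0', sdeg_succ] at hd2
      have := hb m
      simp at hd2
      omega
    · rw [h2]; simp

lemma pSeq_degree (b : ℕ → Polynomial Fq) (m : ℕ) :
    (pSeq Fq (cfA Fq b) (m + 1)).natDegree ≤ sdeg Fq b m ∧
    (pSeq Fq (cfA Fq b) m).natDegree ≤ sdeg Fq b (m - 1) := by
  induction m with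
  | zero => simp [pSeq_zero, pSeq_one]
  | succ m ih =>
    obtain ⟨h1, h2⟩ := ih
    refine ⟨?_, by simpa using h1⟩
    have e : pSeq Fq (cfA Fq b) (m + 1 + 1) = _ := pSeq_rec Fq b m
    rw [e]
    refine (Polynomial.natDegree_add_le _ _).trans (max_le ?_ ?_)
    · refine Polynomial.natDegree_mul_le.trans ?_
      rw [sdeg_succ]
      omega
    · exact h2.trans (sdeg_mono Fq b (by omega))

lemma det_seq (b : ℕ → Polynomial Fq) (m : ℕ) :
    qSeq Fq (cfA Fq b) (m + 1) * pSeq Fq (cfA Fq b) m -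
      qSeq Fq (cfA Fq b) m * pSeq Fq (cfA Fq b) (m + 1) = (-1) ^ m := by
  induction m with
  | zero => simp [qSeq_zero, qSeq_one, pSeq_zero, pSeq_one]
  | succ m ih =>
    have e : pSeq Fq (cfA Fq b) (m + 1 + 1) = _ := pSeq_rec Fq b m
    have e' : qSeq Fq (cfA Fq b) (m + 1 + 1) = _ := qSeq_rec Fq b m
    rw [e, e', pow_succ, ← ih]
    ring

/-- `q_m ξ - p_m`. -/
def DD (b : ℕ → Polynomial Fq) (ξ : K Fq) (m : ℕ) : K Fq :=
  polyToK Fq (qSeq Fq (cfA Fq b) m) * ξ - polyToK Fq (pSeq Fq (cfA Fq b) m)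

lemma DD_rec (b : ℕ → Polynomial Fq) (ξ : K Fq) (m : ℕ) :
    DD Fq b ξ (m + 2) = polyToK Fq (b m) * DD Fq b ξ (m + 1) + DD Fq b ξ m := by
  unfold DD
  rw [pSeq_rec, qSeq_rec]
  simp only [map_add, map_mul]
  ring

lemma kabs_one : kabs Fq 1 = 1 := by
  have := kabs_poly Fq (p := 1) one_ne_zero
  simpa using this

lemma kabs_DD (b : ℕ → Polynomial Fq) (ξ : K Fq) (hξ : IsCFOf Fq ξ (cfA Fq b))
    (hb : ∀ n, 1 ≤ (b n).natDegree) (m : ℕ) :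
    kabs Fq (DD Fq b ξ m) = ((Fintype.card Fq : ℝ) ^ sdeg Fq b m)⁻¹ := by
  rcases m with _ | m
  · simp [DD, qSeq_zero, pSeq_zero, sdeg, kabs_neg, kabs_one]
  · have h := hξ.2 m
    obtain ⟨h1, h2⟩ := (qSeq_degree Fq b hb m).1
    obtain ⟨h3, h4⟩ := (qSeq_degree Fq b hb (m + 1)).1
    rw [kabs_poly Fq h1, kabs_poly Fq h3, h2, h4] at h
    have hne := polyToK_ne_zero Fq h1
    have : DD Fq b ξ (m + 1) = polyToK Fq (qSeq Fq (cfA Fq b) (m + 1)) *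
        (ξ - polyToK Fq (pSeq Fq (cfA Fq b) (m + 1)) /
          polyToK Fq (qSeq Fq (cfA Fq b) (m + 1))) := by
      unfold DD
      field_simp
    rw [this, kabs_mul, h, kabs_poly Fq h1, h2]
    have := card_pos' Fq
    field_simp

lemma kabs_xi_le (b : ℕ → Polynomial Fq) (ξ : K Fq) (hξ : IsCFOf Fq ξ (cfA Fq b))
    (hb : ∀ n, 1 ≤ (b n).natDegree) : kabs Fq ξ ≤ 1 := by
  have h := kabs_DD Fq b ξ hξ hb 1
  simp only [DD, qSeq_one, pSeq_one, map_one, map_zero, one_mul, sub_zero] at h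
  rw [h]
  exact inv_le_one_of_one_le₀ (one_le_pow₀ (by linarith [card_ge_two Fq]))

/-- The value at `ξ` of the quadratic form attached to the positions `i`, `j`. -/
def EE (b : ℕ → Polynomial Fq) (ξ : K Fq) (i j : ℕ) : K Fq :=
  DD Fq b ξ i * DD Fq b ξ (j + 1) - DD Fq b ξ (i + 1) * DD Fq b ξ j

lemma EE_step (b : ℕ → Polynomial Fq) (ξ : K Fq) (i j : ℕ) :
    EE Fq b ξ (i + 1) (j + 1) =
      polyToK Fq (b j - b i) * (DD Fq b ξ (i + 1) * DD Fq b ξ (j + 1)) - EE Fq b ξ i j := by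
  unfold EE
  rw [show i + 1 + 1 = i + 2 from rfl, show j + 1 + 1 = j + 2 from rfl, DD_rec, DD_rec, map_sub]
  ring

lemma kabs_EE_shift (b : ℕ → Polynomial Fq) (ξ : K Fq) (i j n : ℕ)
    (h : ∀ k < n, b (i + k) = b (j + k)) :
    kabs Fq (EE Fq b ξ i j) = kabs Fq (EE Fq b ξ (i + n) (j + n)) := by
  induction n with
  | zero => rfl
  | succ n ih =>
    rw [ih fun k hk => h k (by omega), ← add_assoc, ← add_assoc, EE_step, h n (by omega), sub_self,
      map_zero, zero_mul, zero_sub, kabs_neg]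

section
variable (b : ℕ → Polynomial Fq) (ξ : K Fq) (hξ : IsCFOf Fq ξ (cfA Fq b))
  (hb : ∀ n, 1 ≤ (b n).natDegree)

lemma inv_pow_anti {m n : ℕ} (h : m ≤ n) :
    ((Fintype.card Fq : ℝ) ^ n)⁻¹ ≤ ((Fintype.card Fq : ℝ) ^ m)⁻¹ := by
  have := card_ge_two Fq
  exact inv_anti₀ (by positivity) (pow_le_pow_right₀ (by linarith) h)

lemma inv_pow_strict_anti {m n : ℕ} (h : m < n) :
    ((Fintype.card Fq : ℝ) ^ n)⁻¹ < ((Fintype.card Fq : ℝ) ^ m)⁻¹ := by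
  have := card_ge_two Fq
  exact inv_strictAnti₀ (by positivity) (pow_lt_pow_right₀ (by linarith) h)

lemma kabs_EE_le (hξ : IsCFOf Fq ξ (cfA Fq b)) (hb : ∀ n, 1 ≤ (b n).natDegree) (i j : ℕ) :
    kabs Fq (EE Fq b ξ i j) ≤ ((Fintype.card Fq : ℝ) ^ (sdeg Fq b i + sdeg Fq b j))⁻¹ := by
  unfold EE
  apply kabs_sub_le_of <;> rw [kabs_mul, kabs_DD Fq b ξ hξ hb, kabs_DD Fq b ξ hξ hb, ← mul_inv,
    ← pow_add] <;> apply inv_pow_anti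
  · have := sdeg_mono Fq b (Nat.le_succ j); simp only [Nat.succ_eq_add_one] at this; omega
  · have := sdeg_mono Fq b (Nat.le_succ i); simp only [Nat.succ_eq_add_one] at this; omega

lemma kabs_EE_ge (hξ : IsCFOf Fq ξ (cfA Fq b)) (hb : ∀ n, 1 ≤ (b n).natDegree) (i j : ℕ)
    (hij : b i ≠ b j) :
    ((Fintype.card Fq : ℝ) ^ (sdeg Fq b (i + 1) + sdeg Fq b (j + 1)))⁻¹ ≤
      kabs Fq (EE Fq b ξ i j) := by
  by_contra! hlt
  have h1 : kabs Fq (EE Fq b ξ (i + 1) (j + 1)) <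
      ((Fintype.card Fq : ℝ) ^ (sdeg Fq b (i + 1) + sdeg Fq b (j + 1)))⁻¹ := by
    have hi := sdeg_succ Fq b (i + 1)
    have hj := sdeg_succ Fq b (j + 1)
    have hbi := hb (i + 1)
    have hbj := hb (j + 1)
    have h : kabs Fq (EE Fq b ξ (i + 1) (j + 1)) ≤
        ((Fintype.card Fq : ℝ) ^ (sdeg Fq b (i + 1) + sdeg Fq b (j + 1) + 1))⁻¹ := by
      unfold EE
      apply kabs_sub_le_of <;> rw [kabs_mul, kabs_DD Fq b ξ hξ hb, kabs_DD Fq b ξ hξ hb,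
        ← mul_inv, ← pow_add] <;> apply inv_pow_anti <;> omega
    exact h.trans_lt (inv_pow_strict_anti Fq (Nat.lt_succ_self _))
  have h2 : polyToK Fq (b j - b i) * (DD Fq b ξ (i + 1) * DD Fq b ξ (j + 1)) =
      EE Fq b ξ (i + 1) (j + 1) + EE Fq b ξ i j := by
    rw [EE_step]; ring
  have h3 := kabs_add_le Fq (EE Fq b ξ (i + 1) (j + 1)) (EE Fq b ξ i j)
  rw [← h2, kabs_mul, kabs_mul, kabs_DD Fq b ξ hξ hb, kabs_DD Fq b ξ hξ hb, ← mul_inv,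
    ← pow_add] at h3
  have h4 := h3.trans_lt (max_lt h1 hlt)
  have h5 := one_le_kabs_poly Fq (sub_ne_zero.2 hij.symm)
  have h6 : 0 < ((Fintype.card Fq : ℝ) ^ (sdeg Fq b (i + 1) + sdeg Fq b (j + 1)))⁻¹ := by
    have := card_pos' Fq
    positivity
  nlinarith

lemma exists_quad (hb : ∀ n, 1 ≤ (b n).natDegree) (i j : ℕ) : ∃ x y z : Polynomial Fq,
    x.natDegree ≤ sdeg Fq b i + sdeg Fq b j ∧ y.natDegree ≤ sdeg Fq b i + sdeg Fq b j ∧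
    z.natDegree ≤ sdeg Fq b i + sdeg Fq b j ∧
    EE Fq b ξ i j = polyToK Fq x * ξ ^ 2 + polyToK Fq y * ξ + polyToK Fq z := by
  have q1 : ∀ m, (qSeq Fq (cfA Fq b) m).natDegree ≤ sdeg Fq b m := fun m =>
    (qSeq_degree Fq b hb m).2.trans (sdeg_mono Fq b (by omega))
  have q2 : ∀ m, (qSeq Fq (cfA Fq b) (m + 1)).natDegree ≤ sdeg Fq b m := fun m =>
    (qSeq_degree Fq b hb m).1.2.le
  have p1 : ∀ m, (pSeq Fq (cfA Fq b) m).natDegree ≤ sdeg Fq b m := fun m =>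
    (pSeq_degree Fq b m).2.trans (sdeg_mono Fq b (by omega))
  have p2 : ∀ m, (pSeq Fq (cfA Fq b) (m + 1)).natDegree ≤ sdeg Fq b m := fun m =>
    (pSeq_degree Fq b m).1
  have hmul : ∀ {f g : Polynomial Fq} {m n : ℕ}, f.natDegree ≤ m → g.natDegree ≤ n →
    (f * g).natDegree ≤ m + n := fun hf hg =>
      Polynomial.natDegree_mul_le.trans (add_le_add hf hg)
  have hadd : ∀ {f g : Polynomial Fq} {m : ℕ}, f.natDegree ≤ m → g.natDegree ≤ m →
    (f + g).natDegree ≤ m := fun hf hg =>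
      (Polynomial.natDegree_add_le _ _).trans (max_le hf hg)
  have hsub : ∀ {f g : Polynomial Fq} {m : ℕ}, f.natDegree ≤ m → g.natDegree ≤ m →
    (f - g).natDegree ≤ m := fun hf hg =>
      (Polynomial.natDegree_sub_le _ _).trans (max_le hf hg)
  refine ⟨qSeq Fq (cfA Fq b) i * qSeq Fq (cfA Fq b) (j + 1) -
      qSeq Fq (cfA Fq b) (i + 1) * qSeq Fq (cfA Fq b) j,
    (qSeq Fq (cfA Fq b) (i + 1) * pSeq Fq (cfA Fq b) j +
      pSeq Fq (cfA Fq b) (i + 1) * qSeq Fq (cfA Fq b) j) -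
    (qSeq Fq (cfA Fq b) i * pSeq Fq (cfA Fq b) (j + 1) +
      pSeq Fq (cfA Fq b) i * qSeq Fq (cfA Fq b) (j + 1)),
    pSeq Fq (cfA Fq b) i * pSeq Fq (cfA Fq b) (j + 1) -
      pSeq Fq (cfA Fq b) (i + 1) * pSeq Fq (cfA Fq b) j, ?_, ?_, ?_, ?_⟩
  · exact hsub (hmul (q1 _) (q2 _)) (hmul (q2 _) (q1 _))
  · exact hsub (hadd (hmul (q2 _) (p1 _)) (hmul (p2 _) (q1 _)))
      (hadd (hmul (q1 _) (p2 _)) (hmul (p1 _) (q2 _)))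
  · exact hsub (hmul (p1 _) (p2 _)) (hmul (p2 _) (p1 _))
  · unfold EE DD
    simp only [map_add, map_sub, map_mul]
    ring

/-- Lower bound for linear forms. -/
lemma linear_lower (hξ : IsCFOf Fq ξ (cfA Fq b)) (hb : ∀ n, 1 ≤ (b n).natDegree)
    (u v : Polynomial Fq) (huv : u ≠ 0 ∨ v ≠ 0) (m : ℕ)
    (hu : kabs Fq (polyToK Fq u) < (Fintype.card Fq : ℝ) ^ sdeg Fq b m) :
    ((Fintype.card Fq : ℝ) ^ sdeg Fq b (m + 1))⁻¹ ≤
      kabs Fq (polyToK Fq u * ξ + polyToK Fq v) := by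
  have hQ := card_ge_two Fq
  have key : ∀ n, m ≤ n → n ≤ m + 1 →
      u * pSeq Fq (cfA Fq b) n + v * qSeq Fq (cfA Fq b) n ≠ 0 →
      ((Fintype.card Fq : ℝ) ^ sdeg Fq b (m + 1))⁻¹ ≤
      kabs Fq (polyToK Fq u * ξ + polyToK Fq v) := by
    intro n hmn hn hz
    have h1 := one_le_kabs_poly Fq hz
    have h2 : polyToK Fq (u * pSeq Fq (cfA Fq b) n + v * qSeq Fq (cfA Fq b) n) =
        polyToK Fq (qSeq Fq (cfA Fq b) n) * (polyToK Fq u * ξ + polyToK Fq v) +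
          - (polyToK Fq u * DD Fq b ξ n) := by
      unfold DD
      simp only [map_add, map_mul]
      ring
    have h3 : kabs Fq (-(polyToK Fq u * DD Fq b ξ n)) < 1 := by
      rw [kabs_neg, kabs_mul, kabs_DD Fq b ξ hξ hb, ← div_eq_mul_inv, div_lt_one (by positivity)]
      exact hu.trans_le (pow_le_pow_right₀ (by linarith) (sdeg_mono Fq b hmn))
    rw [h2] at h1
    have h4 := h1.trans (kabs_add_le Fq _ _)
    have h5 : 1 ≤ kabs Fq (polyToK Fq (qSeq Fq (cfA Fq b) n) *
        (polyToK Fq u * ξ + polyToK Fq v)) := by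
      rcases le_max_iff.1 h4 with h | h
      · exact h
      · linarith
    rw [kabs_mul] at h5
    have h6 : kabs Fq (polyToK Fq (qSeq Fq (cfA Fq b) n)) ≤
        (Fintype.card Fq : ℝ) ^ sdeg Fq b (m + 1) :=
      (kabs_poly_le Fq _).trans (pow_le_pow_right₀ (by linarith)
        ((qSeq_degree Fq b hb n).2.trans (sdeg_mono Fq b (by omega))))
    rw [inv_le_iff_one_le_mul₀ (by positivity), mul_comm]
    exact h5.trans (mul_le_mul_of_nonneg_right h6 (kabs_nonneg _ _))
  by_cases hz : u * pSeq Fq (cfA Fq b) m + v * qSeq Fq (cfA Fq b) m = 0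
  · apply key (m + 1) (by omega) le_rfl
    intro hz'
    have hd := det_seq Fq b m
    have e1 : u * (-1) ^ m = 0 := by
      rw [← hd]
      linear_combination qSeq Fq (cfA Fq b) (m + 1) * hz - qSeq Fq (cfA Fq b) m * hz'
    have e2 : v * (-1) ^ m = 0 := by
      rw [← hd]
      linear_combination pSeq Fq (cfA Fq b) m * hz' - pSeq Fq (cfA Fq b) (m + 1) * hz
    have hne : ((-1 : Polynomial Fq)) ^ m ≠ 0 := pow_ne_zero _ (by simp)
    rcases huv with h | h
    · exact h ((mul_eq_zero.1 e1).resolve_right hne)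
    · exact h ((mul_eq_zero.1 e2).resolve_right hne)
  · exact key m le_rfl (by omega) hz

end

/-- Resultant estimate for two quadratic polynomials. -/
lemma res_lower (ξ : K Fq) (hξ : kabs Fq ξ ≤ 1) (a b c x y z : Polynomial Fq) (H G : ℝ)
    (ha : kabs Fq (polyToK Fq a) ≤ H) (hb : kabs Fq (polyToK Fq b) ≤ H)
    (hc : kabs Fq (polyToK Fq c) ≤ H)
    (hx : kabs Fq (polyToK Fq x) ≤ G) (hy : kabs Fq (polyToK Fq y) ≤ G)
    (hz : kabs Fq (polyToK Fq z) ≤ G)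
    (hres : (x * c - a * z) ^ 2 + (x * b - a * y) * (b * z - y * c) ≠ 0) :
    1 ≤ max (kabs Fq (polyToK Fq a * ξ ^ 2 + polyToK Fq b * ξ + polyToK Fq c) * (H * G ^ 2))
      (kabs Fq (polyToK Fq x * ξ ^ 2 + polyToK Fq y * ξ + polyToK Fq z) * (H ^ 2 * G)) := by
  have h1 := one_le_kabs_poly Fq hres
  set a' := polyToK Fq a
  set b' := polyToK Fq b
  set c' := polyToK Fq c
  set x' := polyToK Fq x
  set y' := polyToK Fq y
  set z' := polyToK Fq z
  have e : polyToK Fq ((x * c - a * z) ^ 2 + (x * b - a * y) * (b * z - y * c)) =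
      (a' * ξ ^ 2 + b' * ξ + c') *
        ((x' * c' - a' * z') * x' - (x' * b' - a' * y') * (y' + ξ * x')) +
      (x' * ξ ^ 2 + y' * ξ + z') *
        ((x' * b' - a' * y') * (b' + ξ * a') - (x' * c' - a' * z') * a') := by
    simp only [map_add, map_sub, map_mul, map_pow]
    ring
  rw [e] at h1
  have hu : kabs Fq (x' * b' - a' * y') ≤ H * G := kabs_sub_le_of Fq
    ((kabs_mul_le Fq hx hb).trans_eq (mul_comm _ _)) (kabs_mul_le Fq ha hy)
  have hv : kabs Fq (x' * c' - a' * z') ≤ H * G := kabs_sub_le_of Fq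
    ((kabs_mul_le Fq hx hc).trans_eq (mul_comm _ _)) (kabs_mul_le Fq ha hz)
  have hyx : kabs Fq (y' + ξ * x') ≤ G :=
    kabs_add_le_of Fq hy ((kabs_mul_le Fq hξ hx).trans_eq (one_mul _))
  have hba : kabs Fq (b' + ξ * a') ≤ H :=
    kabs_add_le_of Fq hb ((kabs_mul_le Fq hξ ha).trans_eq (one_mul _))
  refine h1.trans ((kabs_add_le Fq _ _).trans (max_le_max ?_ ?_))
  · refine kabs_mul_le Fq le_rfl ?_
    refine kabs_sub_le_of Fq ((kabs_mul_le Fq hv hx).trans_eq (by ring))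
      ((kabs_mul_le Fq hu hyx).trans_eq (by ring))
  · refine kabs_mul_le Fq le_rfl ?_
    refine kabs_sub_le_of Fq ((kabs_mul_le Fq hu hba).trans_eq (by ring))
      ((kabs_mul_le Fq hv ha).trans_eq (by ring))

/-! ### The main estimate -/

lemma linear_asym (b : ℕ → Polynomial Fq) (ξ : K Fq) (hξ : IsCFOf Fq ξ (cfA Fq b))
    (hb : ∀ n, 1 ≤ (b n).natDegree) (μ M : ℝ) (N : ℕ) (hμ : 0 < μ) (hM : μ ≤ M)
    (h1 : ∀ m : ℕ, N ≤ m → μ * m ≤ sdeg Fq b m)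
    (h2 : ∀ m : ℕ, N ≤ m → (sdeg Fq b m : ℝ) ≤ M * m)
    (g : ℝ) (hg : μ * (N + 1) ≤ g) (u v : Polynomial Fq) (huv : u ≠ 0 ∨ v ≠ 0)
    (hu : (u.natDegree : ℝ) ≤ g) :
    (Fintype.card Fq : ℝ) ^ (-(4 * (M / μ) * g)) ≤
      kabs Fq (polyToK Fq u * ξ + polyToK Fq v) := by
  have hQ := card_ge_two Fq
  have hgm : (N : ℝ) + 1 ≤ g / μ := by rw [le_div_iff₀ hμ]; linarith
  have hN0 : (0 : ℝ) ≤ N := Nat.cast_nonneg N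
  set m := ⌊g / μ⌋₊ + 1 with hm
  have hm1 : g / μ < m := by rw [hm]; push_cast; exact Nat.lt_floor_add_one _
  have hm2 : (m : ℝ) ≤ g / μ + 1 := by
    rw [hm]; push_cast
    linarith [Nat.floor_le (show 0 ≤ g / μ by linarith)]
  have hNm : N ≤ m := by
    have : (N : ℝ) ≤ m := by linarith
    exact_mod_cast this
  have hgs : g < sdeg Fq b m := by
    have := h1 m hNm
    rw [div_lt_iff₀ hμ] at hm1
    linarith
  have hlt : u.natDegree < sdeg Fq b m := by
    have : (u.natDegree : ℝ) < sdeg Fq b m := lt_of_le_of_lt hu hgs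
    exact_mod_cast this
  have key := linear_lower Fq b ξ hξ hb u v huv m
    ((kabs_poly_le Fq u).trans_lt (pow_lt_pow_right₀ (by linarith) hlt))
  refine le_trans ?_ key
  rw [← Real.rpow_natCast, ← Real.rpow_neg (by linarith)]
  apply Real.rpow_le_rpow_of_exponent_le (by linarith)
  have h3 := h2 (m + 1) (by omega)
  push_cast at h3
  have h4 : 4 * (M / μ) * g = M * (4 * (g / μ)) := by ring
  rw [h4, neg_le_neg_iff]
  refine h3.trans (mul_le_mul_of_nonneg_left ?_ (by linarith))
  linarith

set_option maxHeartbeats 2000000 in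
lemma core (b : ℕ → Polynomial Fq) (ξ : K Fq) (hξ : IsCFOf Fq ξ (cfA Fq b))
    (hb : ∀ n, 1 ≤ (b n).natDegree) (κ : ℕ) (hκ : 2 ≤ κ) (μ M δ : ℝ) (N : ℕ)
    (hμ : 0 < μ) (hM : μ ≤ M) (hδ : 1 ≤ δ)
    (h1 : ∀ n i : ℕ, N ≤ n → i ≤ κ * n → μ * n ≤ (sdeg Fq b (i + n) : ℝ) - sdeg Fq b i)
    (h2 : ∀ m : ℕ, N ≤ m → (sdeg Fq b m : ℝ) ≤ M * m)
    (h3 : ∀ i j l : ℕ, i < j → N ≤ l → (∀ k < l, b (i + k) = b (j + k)) →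
      ((j : ℝ) + l) ≤ δ * j)
    (h4 : ∀ n, N ≤ n → ∃ i j, i < j ∧ j ≤ κ * n ∧ ∀ k < n, b (i + k) = b (j + k))
    (h : ℕ) (hh : μ * (N + 1) ≤ h) (x y z : Polynomial Fq)
    (hx : x.natDegree ≤ h) (hy : y.natDegree ≤ h) (hz : z.natDegree ≤ h)
    (hne : polyToK Fq x * ξ ^ 2 + polyToK Fq y * ξ + polyToK Fq z ≠ 0) :
    (Fintype.card Fq : ℝ) ^ (-(48 * κ * (M / μ) ^ 2 * δ * h)) ≤
      kabs Fq (polyToK Fq x * ξ ^ 2 + polyToK Fq y * ξ + polyToK Fq z) := by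
  have hQ := card_ge_two Fq
  set Q : ℝ := (Fintype.card Fq : ℝ) with hQdef
  set f := polyToK Fq x * ξ ^ 2 + polyToK Fq y * ξ + polyToK Fq z with hf
  set r := M / μ with hr
  have hr1 : 1 ≤ r := by rw [hr, le_div_iff₀ hμ]; linarith
  have hk2 : (2 : ℝ) ≤ κ := by exact_mod_cast hκ
  have hh0 : (0 : ℝ) ≤ h := Nat.cast_nonneg h
  have hN0 : (0 : ℝ) ≤ N := Nat.cast_nonneg N
  -- elementary inequalities
  have i1 : 2 ≤ κ * r := by nlinarith
  have i2 : κ * r ≤ κ * r ^ 2 := by nlinarith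
  have i3 : κ * r ^ 2 ≤ κ * r ^ 2 * δ := by
    have : 0 ≤ κ * r ^ 2 := by positivity
    nlinarith
  have i4 : κ * r * δ ≤ κ * r ^ 2 * δ := by nlinarith
  have i5 : 2 * r ≤ κ * r := by nlinarith
  have lin0 : ∀ m : ℕ, N ≤ m → μ * m ≤ sdeg Fq b m := by
    intro m hm
    have := h1 m 0 hm (Nat.zero_le _)
    simpa [sdeg] using this
  have fin : ∀ e : ℝ, e ≤ 48 * κ * r ^ 2 * δ * h → Q ^ (-e) ≤ kabs Fq f →
      Q ^ (-(48 * κ * r ^ 2 * δ * h)) ≤ kabs Fq f := fun e he hef =>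
    (Real.rpow_le_rpow_of_exponent_le (by linarith) (by linarith)).trans hef
  have rp : ∀ e : ℕ, Q ^ (-(e : ℝ)) = (Q ^ e)⁻¹ := fun e => by
    rw [Real.rpow_neg (by linarith), Real.rpow_natCast]
  by_cases hx0 : x = 0
  · have hf' : f = polyToK Fq y * ξ + polyToK Fq z := by rw [hf, hx0]; simp
    have hyz : y ≠ 0 ∨ z ≠ 0 := by
      by_contra! hc
      apply hne
      rw [hf', hc.1, hc.2]
      simp
    refine fin (4 * r * h) ?_ ?_
    · have : 4 * r ≤ 48 * κ * r ^ 2 * δ := by linarith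
      exact mul_le_mul_of_nonneg_right this hh0
    · rw [hf']
      exact linear_asym Fq b ξ hξ hb μ M N hμ hM lin0 h2 h hh y z hyz (by exact_mod_cast hy)
  -- choice of n
  have hgm : (N : ℝ) + 1 ≤ h / μ := by rw [le_div_iff₀ hμ]; linarith
  set n := ⌊(h : ℝ) / μ⌋₊ + 1 with hn
  have hn1 : h / μ < n := by rw [hn]; push_cast; exact Nat.lt_floor_add_one _
  have hn2 : (n : ℝ) ≤ 2 * (h / μ) := by
    rw [hn]; push_cast
    linarith [Nat.floor_le (show 0 ≤ (h : ℝ) / μ by linarith)]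
  have hNn : N ≤ n := by
    have : (N : ℝ) ≤ n := by linarith
    exact_mod_cast this
  have hn0 : 1 ≤ n := by omega
  have hMn : M * n ≤ 2 * r * h := by
    have : M * n ≤ M * (2 * (h / μ)) := mul_le_mul_of_nonneg_left hn2 (by linarith)
    refine this.trans_eq ?_
    rw [hr]; ring
  have hhn : (h : ℝ) < μ * n := by
    rw [div_lt_iff₀ hμ] at hn1
    linarith
  obtain ⟨i, j, hij, hjk, hw⟩ := h4 n hNn
  have hnk : n ≤ κ * n := Nat.le_mul_of_pos_left _ (by omega)
  have hsk : (sdeg Fq b (κ * n) : ℝ) ≤ 2 * κ * r * h := by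
    have := h2 (κ * n) (hNn.trans hnk)
    push_cast at this
    nlinarith
  obtain ⟨x', y', z', hx', hy', hz', hE⟩ := exists_quad Fq b ξ hb i j
  set g := sdeg Fq b i + sdeg Fq b j with hg
  have hgr : (g : ℝ) ≤ 4 * κ * r * h := by
    have e1 : (sdeg Fq b i : ℝ) ≤ sdeg Fq b (κ * n) := by
      exact_mod_cast sdeg_mono Fq b (by omega)
    have e2 : (sdeg Fq b j : ℝ) ≤ sdeg Fq b (κ * n) := by
      exact_mod_cast sdeg_mono Fq b (by omega)
    rw [hg]; push_cast
    linarith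
  have bd : ∀ {p : Polynomial Fq} {e : ℕ}, p.natDegree ≤ e → kabs Fq (polyToK Fq p) ≤ Q ^ e :=
    fun hp => (kabs_poly_le Fq _).trans (pow_le_pow_right₀ (by linarith) hp)
  by_cases hres : (x' * z - x * z') ^ 2 + (x' * y - x * y') * (y * z' - y' * z) = 0
  swap
  · have key := res_lower Fq ξ (kabs_xi_le Fq b ξ hξ hb) x y z x' y' z' (Q ^ h) (Q ^ g)
      (bd hx) (bd hy) (bd hz) (bd hx') (bd hy') (bd hz') hres
    rw [← hE, ← hf] at key
    have hs1 : sdeg Fq b i + h + 1 ≤ sdeg Fq b (i + n) := by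
      have := h1 n i hNn (by omega)
      have h5 : ((sdeg Fq b i + h : ℕ) : ℝ) < sdeg Fq b (i + n) := by push_cast; linarith
      exact_mod_cast h5
    have hs2 : sdeg Fq b j + h + 1 ≤ sdeg Fq b (j + n) := by
      have := h1 n j hNn hjk
      have h5 : ((sdeg Fq b j + h : ℕ) : ℝ) < sdeg Fq b (j + n) := by push_cast; linarith
      exact_mod_cast h5
    have hlt : kabs Fq (EE Fq b ξ i j) * ((Q ^ h) ^ 2 * Q ^ g) < 1 := by
      rw [kabs_EE_shift Fq b ξ i j n hw, ← pow_mul, ← pow_add]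
      have h5 := kabs_EE_le Fq b ξ hξ hb (i + n) (j + n)
      refine (mul_le_mul_of_nonneg_right h5 (by positivity)).trans_lt ?_
      rw [inv_mul_lt_iff₀ (by positivity), mul_one]
      exact pow_lt_pow_right₀ (by linarith) (by omega)
    have h6 : 1 ≤ kabs Fq f * (Q ^ h * (Q ^ g) ^ 2) := by
      rcases le_max_iff.1 key with h | h
      · exact h
      · linarith
    refine fin ((h + 2 * g : ℕ) : ℝ) ?_ ?_
    · push_cast
      have : 1 + 8 * (κ * r) ≤ 48 * κ * r ^ 2 * δ := by linarith
      have := mul_le_mul_of_nonneg_right this hh0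
      nlinarith
    · rw [rp, inv_le_iff_one_le_mul₀ (by positivity)]
      refine h6.trans_eq ?_
      ring
  by_cases hu : x' * y - x * y' = 0
  · -- proportional case
    have hv : x' * z - x * z' = 0 := by
      rw [hu, zero_mul, add_zero] at hres
      exact pow_eq_zero_iff (two_ne_zero) |>.1 hres
    have hprop : polyToK Fq x' * f = polyToK Fq x * EE Fq b ξ i j := by
      rw [hE, hf]
      have e1 := congrArg (polyToK Fq) hu
      have e2 := congrArg (polyToK Fq) hv
      simp only [map_sub, map_mul, map_zero] at e1 e2
      linear_combination ξ * e1 + e2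
    -- first mismatch
    have hex : ∃ l, b (i + l) ≠ b (j + l) := by
      by_contra! hall
      have hj0 : (0 : ℝ) ≤ j := Nat.cast_nonneg j
      obtain ⟨l, hl⟩ := exists_nat_gt (max (N : ℝ) (δ * j))
      have hl1 : N ≤ l := by
        have : (N : ℝ) ≤ l := (le_max_left _ _).trans hl.le
        exact_mod_cast this
      have := h3 i j l hij hl1 fun k _ => hall k
      have := (le_max_right (N : ℝ) (δ * j)).trans_lt hl
      linarith
    classical
    set l := Nat.find hex with hl
    have hl1 : b (i + l) ≠ b (j + l) := Nat.find_spec hex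
    have hl2 : ∀ k < l, b (i + k) = b (j + k) := fun k hk => by
      have := Nat.find_min hex hk
      simpa using this
    have hnl : n ≤ l := by
      by_contra! hc
      exact hl1 (hw l hc)
    have hjl := h3 i j l hij (hNn.trans hnl) hl2
    have hEge := kabs_EE_ge Fq b ξ hξ hb (i + l) (j + l) hl1
    rw [← kabs_EE_shift Fq b ξ i j l hl2] at hEge
    have hjr : (j : ℝ) ≤ κ * n := by exact_mod_cast hjk
    have hnr : (1 : ℝ) ≤ n := by exact_mod_cast hn0
    have hs : (sdeg Fq b (j + l + 1) : ℝ) ≤ 4 * (κ * r * δ) * h := by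
      have e1 := h2 (j + l + 1) (by omega)
      push_cast at e1
      have e2 : (j : ℝ) + l + 1 ≤ 2 * (δ * (κ * n)) := by
        have : δ * j ≤ δ * (κ * n) := mul_le_mul_of_nonneg_left hjr (by linarith)
        have : 1 ≤ δ * (κ * n) := by
          have : (1 : ℝ) ≤ κ * n := by exact_mod_cast hn0.trans hnk
          exact one_le_mul_of_one_le_of_one_le hδ this
        linarith
      have e3 : M * (j + l + 1) ≤ M * (2 * (δ * (κ * n))) :=
        mul_le_mul_of_nonneg_left e2 (by linarith)
      have e4 : 2 * δ * κ * (M * n) ≤ 2 * δ * κ * (2 * r * h) :=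
        mul_le_mul_of_nonneg_left hMn (by positivity)
      nlinarith
    have hEge2 : (Q ^ (2 * sdeg Fq b (j + l + 1)))⁻¹ ≤ kabs Fq (EE Fq b ξ i j) := by
      refine le_trans (inv_pow_anti Fq ?_) hEge
      have := sdeg_mono Fq b (show i + l + 1 ≤ j + l + 1 by omega)
      omega
    have hk := congrArg (kabs Fq) hprop
    rw [kabs_mul, kabs_mul] at hk
    have hx1 := one_le_kabs_poly Fq hx0
    have hxg := bd hx'
    have h7 : kabs Fq (EE Fq b ξ i j) ≤ kabs Fq f * Q ^ g := by
      have t1 := mul_le_mul_of_nonneg_right hx1 (kabs_nonneg Fq (EE Fq b ξ i j))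
      have t2 := mul_le_mul_of_nonneg_right hxg (kabs_nonneg Fq f)
      linarith
    refine fin ((2 * sdeg Fq b (j + l + 1) + g : ℕ) : ℝ) ?_ ?_
    · push_cast
      have : 8 * (κ * r * δ) + 4 * (κ * r) ≤ 48 * κ * r ^ 2 * δ := by linarith
      have := mul_le_mul_of_nonneg_right this hh0
      nlinarith
    · rw [rp, pow_add, mul_inv, mul_inv_le_iff₀ (by positivity)]
      exact hEge2.trans h7
  · -- reducible case
    set u := x' * y - x * y' with hud
    set v := x' * z - x * z' with hvd
    have hid : polyToK Fq u ^ 2 * f = (polyToK Fq u * ξ + polyToK Fq v) *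
        (polyToK Fq (x * u) * ξ + polyToK Fq (y * u - x * v)) := by
      have e1 := congrArg (polyToK Fq) hres
      have e2 : polyToK Fq (z * u - y * v) = polyToK Fq (x * (y * z' - y' * z)) := by
        congr 1
        rw [hud, hvd]; ring
      simp only [map_sub, map_mul, map_zero, map_add, map_pow] at e1 e2 ⊢
      rw [hf]
      linear_combination (polyToK Fq x) * e1 + (polyToK Fq u) * e2
    have hdu : u.natDegree ≤ h + g := by
      refine (Polynomial.natDegree_sub_le _ _).trans (max_le ?_ ?_)
      · exact Polynomial.natDegree_mul_le.trans (by omega)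
      · exact Polynomial.natDegree_mul_le.trans (by omega)
    have hdxu : (x * u).natDegree ≤ 2 * h + g := Polynomial.natDegree_mul_le.trans (by omega)
    have hg0 : (0 : ℝ) ≤ g := Nat.cast_nonneg g
    have L1 := linear_asym Fq b ξ hξ hb μ M N hμ hM lin0 h2 (h + g) (by linarith) u v (Or.inl hu)
      (by exact_mod_cast hdu)
    have L2 := linear_asym Fq b ξ hξ hb μ M N hμ hM lin0 h2 (2 * h + g) (by linarith) (x * u)
      (y * u - x * v) (Or.inl (mul_ne_zero hx0 hu)) (by exact_mod_cast hdxu)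
    have hk := congrArg (kabs Fq) hid
    rw [kabs_mul, kabs_mul, pow_two, kabs_mul] at hk
    have hku := bd hdu
    have hku0 := kabs_nonneg Fq (polyToK Fq u)
    have h8 : Q ^ (-(4 * (M / μ) * (h + g))) * Q ^ (-(4 * (M / μ) * (2 * h + g))) ≤
        kabs Fq f * (Q ^ (h + g) * Q ^ (h + g)) := by
      refine (mul_le_mul L1 L2 (by positivity) (kabs_nonneg _ _)).trans ?_
      rw [← hk, mul_comm]
      exact mul_le_mul_of_nonneg_left (mul_le_mul hku hku hku0 (by positivity)) (kabs_nonneg _ _)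
    refine fin (4 * r * (h + g) + 4 * r * (2 * h + g) + ((2 * (h + g) : ℕ) : ℝ)) ?_ ?_
    · push_cast
      have e1 : r * g ≤ r * (4 * κ * r * h) := mul_le_mul_of_nonneg_left hgr (by linarith)
      have e2 : 12 * r + 32 * (κ * r ^ 2) + 2 + 8 * (κ * r) ≤ 48 * κ * r ^ 2 * δ := by linarith
      have := mul_le_mul_of_nonneg_right e2 hh0
      nlinarith
    · rw [neg_add, Real.rpow_add (by linarith), rp, neg_add, Real.rpow_add (by linarith),
        mul_inv_le_iff₀ (by positivity)]
      refine h8.trans_eq ?_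
      ring

/-! ### Words -/

lemma wordPow_props {α : Type*} (b : ℕ → α) (i j l : ℕ) (hij : i < j)
    (hw : ∀ k < l, b (i + k) = b (j + k)) :
    ∃ (V : List α) (w : ℝ), V.length = j - i ∧ 0 ≤ w ∧
      (wordPow V w).length = j - i + l ∧
      ∀ (k : ℕ) (h : k < (wordPow V w).length), (wordPow V w).get ⟨k, h⟩ = b (i + k) := by
  set d := j - i with hd
  have hd0 : 0 < d := by omega
  have hd0' : (0 : ℝ) < d := by exact_mod_cast hd0
  -- periodicity
  have per : ∀ k, k < d + l → b (i + k) = b (i + k % d) := by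
    intro k
    induction k using Nat.strong_induction_on with
    | _ k ih =>
      intro hk
      by_cases hkd : k < d
      · rw [Nat.mod_eq_of_lt hkd]
      · have h1 := ih (k - d) (by omega) (by omega)
        have h2 := hw (k - d) (by omega)
        rw [show j + (k - d) = i + k by omega] at h2
        rw [← h2, h1, Nat.mod_eq_sub_mod (not_lt.1 hkd)]
  set V : List α := List.ofFn fun k : Fin d => b (i + k) with hV
  have hVl : V.length = d := by simp [hV]
  set w : ℝ := ((d + l : ℕ) : ℝ) / d with hw'
  have hfl : ⌊w⌋₊ = (d + l) / d := by
    rw [hw', Nat.floor_div_natCast, Nat.floor_natCast]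
  have hce : ⌈(w - ⌊w⌋₊) * V.length⌉₊ = (d + l) % d := by
    have : (w - ⌊w⌋₊) * V.length = (((d + l) % d : ℕ) : ℝ) := by
      rw [hfl, hVl, sub_mul, hw', div_mul_cancel₀ _ hd0'.ne']
      have := Nat.div_add_mod (d + l) d
      have h3 : (d : ℝ) * (((d + l) / d : ℕ) : ℝ) + (((d + l) % d : ℕ) : ℝ) = ((d + l : ℕ) : ℝ) := by
        exact_mod_cast this
      linarith
    rw [this, Nat.ceil_natCast]
  have hrep : ∀ m : ℕ, (List.replicate m V).flatten = List.ofFn fun k : Fin (m * d) => b (i + k % d) := by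
    intro m
    induction m with
    | zero => simp
    | succ m ih =>
      rw [List.replicate_succ', List.flatten_append, ih]
      apply List.ext_getElem
      · simp [hVl, Nat.succ_mul]
      · intro k h1 h2
        simp only [List.length_ofFn] at h2
        rw [List.getElem_ofFn, List.getElem_append]
        split_ifs with h3
        · rw [List.getElem_ofFn]
        · simp only [List.length_ofFn, not_lt] at h3
          simp only [List.flatten_cons, List.flatten_nil, List.append_nil, hV, List.length_ofFn,
            List.getElem_ofFn]
          have : k = (k - m * d) + m * d := by omega
          have h4 : k % d = k - m * d := by
            rw [Nat.succ_mul] at h2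
            conv_lhs => rw [this]
            rw [Nat.add_mul_mod_self_right, Nat.mod_eq_of_lt (by omega)]
          rw [h4]
  have hlt := Nat.mod_lt (d + l) hd0
  have hdm := Nat.div_add_mod (d + l) d
  have hlen : (wordPow V w).length = d + l := by
    unfold wordPow
    rw [hce, hfl, hrep, List.length_append, List.length_ofFn, List.length_take, hVl,
      min_eq_left hlt.le, mul_comm, hdm]
  refine ⟨V, w, hVl, by positivity, hlen, ?_⟩
  intro k hk
  rw [hlen] at hk
  rw [per k hk, List.get_eq_getElem]
  unfold wordPow
  simp only [hfl, hrep]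
  rw [List.getElem_append]
  split_ifs with h3
  · rw [List.getElem_ofFn]
  · simp only [List.length_ofFn, not_lt] at h3
    simp only [List.length_ofFn, List.getElem_take, hV, List.getElem_ofFn]
    have h5 : (d + l) / d * d = d * ((d + l) / d) := mul_comm _ _
    have : k = (k - (d + l) / d * d) + (d + l) / d * d := by omega
    have h4 : k % d = k - (d + l) / d * d := by
      conv_lhs => rw [this]
      rw [Nat.add_mul_mod_self_right, Nat.mod_eq_of_lt (by omega)]
    rw [h4]

lemma satisfiesCond_of {α : Type*} (b : ℕ → α) (ρ : ℝ)
    (h : ∀ N : ℕ, ∃ i j l, i < j ∧ N ≤ l ∧ (∀ k < l, b (i + k) = b (j + k)) ∧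
      ρ * j ≤ (j : ℝ) + l) : SatisfiesCond b ρ := by
  have step : ∀ N : ℕ, ∃ (U V : List α) (w : ℝ), V ≠ [] ∧ 0 ≤ w ∧
      IsPrefixOfSeq (U ++ wordPow V w) b ∧
      ρ * ((U.length + V.length : ℕ) : ℝ) ≤ ((U.length + (wordPow V w).length : ℕ) : ℝ) ∧
      N < (wordPow V w).length := by
    intro N
    obtain ⟨i, j, l, hij, hl, hw, hr⟩ := h N
    obtain ⟨V, w, hV, hw0, hlen, hget⟩ := wordPow_props b i j l hij hw
    refine ⟨List.ofFn fun k : Fin i => b k, V, w, ?_, hw0, ?_, ?_, by omega⟩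
    · rintro rfl
      simp at hV
      omega
    · intro k hk
      rw [List.get_eq_getElem, List.getElem_append]
      split_ifs with h3
      · rw [List.getElem_ofFn]
      · simp only [List.length_ofFn, not_lt] at h3
        have := hget (k - i) (by simp at hk; omega)
        rw [List.get_eq_getElem] at this
        simp only [List.length_ofFn]
        rw [this]
        congr 1
        omega
    · rw [List.length_ofFn, hV, hlen]
      rw [show i + (j - i) = j by omega, show i + (j - i + l) = j + l by omega]
      push_cast
      exact hr
  choose U V w hV hw0 hp hr hN using step
  let t : ℕ → ℕ := fun n => Nat.rec 0 (fun _ m => (wordPow (V m) (w m)).length) n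
  have ht : ∀ n, t (n + 1) = (wordPow (V (t n)) (w (t n))).length := fun n => rfl
  refine ⟨fun n => U (t n), fun n => V (t n), fun n => w (t n), fun n => hV _, fun n => hw0 _,
    fun n => hp _, fun n => hr _, ?_⟩
  apply strictMono_nat_of_lt_succ
  intro n
  rw [← ht n]
  exact hN (t (n + 1))

lemma one_le_dioExp {α : Type*} (b : ℕ → α) : (1 : EReal) ≤ dioExp b := by
  apply le_sSup
  refine ⟨1, by simp, fun _ => [], fun n => List.ofFn fun k : Fin (n + 1) => b k,
    fun _ => 1, ?_, ?_, ?_, ?_, ?_⟩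
  · intro n hn
    have := congrArg List.length hn
    simp at this
  · intro n; norm_num
  · intro n k hk
    simp only [wordPow, List.get_eq_getElem, Nat.floor_one, List.replicate_one, List.flatten_cons,
      List.flatten_nil, List.append_nil, List.nil_append, Nat.cast_one, sub_self, zero_mul,
      Nat.ceil_zero, List.take_zero, List.getElem_ofFn]
  · intro n
    simp [wordPow]
  · intro m n hmn
    simpa [wordPow] using hmn

lemma dio_bound {α : Type*} (b : ℕ → α) (δ : ℝ) (hδ : dioExp b < (δ : EReal)) :
    ∃ N : ℕ, ∀ i j l : ℕ, i < j → N ≤ l → (∀ k < l, b (i + k) = b (j + k)) →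
      ((j : ℝ) + l) ≤ δ * j := by
  by_contra! hc
  have : SatisfiesCond b δ := satisfiesCond_of b δ fun N => by
    obtain ⟨i, j, l, h1, h2, h3, h4⟩ := hc N
    exact ⟨i, j, l, h1, h2, h3, h4.le⟩
  exact absurd (le_sSup (show (δ : EReal) ∈ {x : EReal | ∃ ρ : ℝ, x = (ρ : EReal) ∧
    SatisfiesCond b ρ} from ⟨δ, rfl, this⟩)) (not_le.2 hδ)

lemma pigeon {α : Type*} (b : ℕ → α) (κ n : ℕ) (h : complexity b n ≤ ((κ * n : ℕ) : ℕ∞)) :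
    ∃ i j, i < j ∧ j ≤ κ * n ∧ ∀ k < n, b (i + k) = b (j + k) := by
  by_contra! hc
  let F : ℕ → (Fin n → α) := fun i k => b (i + k)
  have hinj : Set.InjOn F (Set.Iio (κ * n + 1)) := by
    intro i hi j hj hF
    have hsymm : ∀ i j, i < j → j < κ * n + 1 → F i ≠ F j := by
      intro i j hij hj hF
      obtain ⟨k, hk, hne⟩ := hc i j hij (by omega)
      exact hne (congrFun hF ⟨k, hk⟩)
    rcases lt_trichotomy i j with h | h | h
    · exact absurd hF (hsymm i j h hj)
    · exact h
    · exact absurd hF.symm (hsymm j i h hi)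
  have h1 := hinj.encard_image
  have h2 : F '' Set.Iio (κ * n + 1) ⊆ {w : Fin n → α | ∃ i : ℕ, ∀ k : Fin n, w k = b (i + k)} := by
    rintro _ ⟨i, _, rfl⟩
    exact ⟨i, fun _ => rfl⟩
  have h3 := (Set.encard_le_encard h2).trans h
  rw [h1] at h3
  have h4 : (Set.Iio (κ * n + 1)).encard = ((κ * n + 1 : ℕ) : ℕ∞) := by
    rw [← Finset.coe_Iio, Set.encard_coe_eq_coe_finsetCard, Nat.card_Iio]
  rw [h4] at h3
  have : κ * n + 1 ≤ κ * n := by exact_mod_cast h3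
  omega

/-! ### Assembly -/

lemma evalK_quad (P : Polynomial (Polynomial Fq)) (hP : P.natDegree ≤ 2) (ξ : K Fq) :
    evalK Fq P ξ = polyToK Fq (P.coeff 2) * ξ ^ 2 + polyToK Fq (P.coeff 1) * ξ +
      polyToK Fq (P.coeff 0) := by
  unfold evalK
  rw [Polynomial.eval₂_eq_sum_range' (polyToK Fq) (show P.natDegree < 3 by omega)]
  simp [Finset.sum_range_succ]
  ring

lemma w_bound (b : ℕ → Polynomial Fq) (ξ : K Fq) (hξ : IsCFOf Fq ξ (cfA Fq b))
    (hb : ∀ n, 1 ≤ (b n).natDegree) (κ : ℕ) (hκ : 2 ≤ κ) (μ M δ : ℝ) (N : ℕ)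
    (hμ : 0 < μ) (hM : μ ≤ M) (hδ : 1 ≤ δ)
    (h1 : ∀ n i : ℕ, N ≤ n → i ≤ κ * n → μ * n ≤ (sdeg Fq b (i + n) : ℝ) - sdeg Fq b i)
    (h2 : ∀ m : ℕ, N ≤ m → (sdeg Fq b m : ℝ) ≤ M * m)
    (h3 : ∀ i j l : ℕ, i < j → N ≤ l → (∀ k < l, b (i + k) = b (j + k)) →
      ((j : ℝ) + l) ≤ δ * j)
    (h4 : ∀ n, N ≤ n → ∃ i j, i < j ∧ j ≤ κ * n ∧ ∀ k < n, b (i + k) = b (j + k))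
    (W : ℝ) (hW : 48 * κ * (M / μ) ^ 2 * δ ≤ W) : wExp Fq 2 ξ ≤ (W : EReal) := by
  apply sSup_le
  rintro _ ⟨w, rfl, hinf⟩
  rw [EReal.coe_le_coe_iff]
  by_contra! hlt
  apply hinf
  have hQ := card_ge_two Fq
  set h0 := ⌈μ * (N + 1)⌉₊ with hh0
  refine (finite_polys Fq h0).subset ?_
  rintro P ⟨hdeg, hpos, hle⟩
  refine ⟨hdeg, ?_⟩
  have hP0 : P ≠ 0 := by
    rintro rfl
    rw [evalK, Polynomial.eval₂_zero, kabs_zero] at hpos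
    exact lt_irrefl _ hpos
  obtain ⟨h, hall, hH⟩ := Hpoly_eq Fq P hP0
  by_cases hhh : h ≤ h0
  · exact fun i => (hall i).trans hhh
  exfalso
  push Not at hhh
  have hh1 : μ * (N + 1) ≤ h := (Nat.le_ceil _).trans (Nat.cast_le.2 hhh.le)
  have hhpos : (0 : ℝ) < h := by
    have : 0 < h := by omega
    exact_mod_cast this
  have hne := kabs_ne_zero_of_pos Fq hpos
  rw [evalK_quad Fq P hdeg] at hne hle
  have key := core Fq b ξ hξ hb κ hκ μ M δ N hμ hM hδ h1 h2 h3 h4 h hh1 _ _ _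
    (hall 2) (hall 1) (hall 0) hne
  have h5 := key.trans hle
  rw [hH, ← Real.rpow_natCast _ h, ← Real.rpow_mul (by linarith),
    Real.rpow_le_rpow_left_iff (by linarith)] at h5
  nlinarith

lemma sdeg_add_le (b : ℕ → Polynomial Fq) (hb : ∀ n, 1 ≤ (b n).natDegree) (i n : ℕ) :
    sdeg Fq b i + n ≤ sdeg Fq b (i + n) := by
  induction n with
  | zero => simp
  | succ n ih =>
    rw [← add_assoc, ← add_assoc, sdeg_succ]
    have := hb (i + n)
    omega

lemma sdeg_le (b : ℕ → Polynomial Fq) (r : ℝ) (hb : ∀ n, ((b n).natDegree : ℝ) ≤ r) (n : ℕ) :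
    (sdeg Fq b n : ℝ) ≤ r * n := by
  induction n with
  | zero => simp [sdeg]
  | succ n ih =>
    rw [sdeg_succ]
    push_cast
    linarith [hb n]

lemma limit_bounds (b : ℕ → Polynomial Fq) (hb : ∀ n, 1 ≤ (b n).natDegree) (κ : ℕ) (l : ℝ)
    (hl : Filter.Tendsto (fun n : ℕ => kabs Fq (polyToK Fq (qden Fq b n)) ^ ((n : ℝ)⁻¹))
        Filter.atTop (nhds l)) :
    ∃ (lam : ℝ) (N : ℕ), 1 ≤ lam ∧
      (∀ n i : ℕ, N ≤ n → i ≤ κ * n →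
        (2 / 3 * lam) * n ≤ (sdeg Fq b (i + n) : ℝ) - sdeg Fq b i) ∧
      (∀ m : ℕ, N ≤ m → (sdeg Fq b m : ℝ) ≤ (4 / 3 * lam) * m) := by
  have hQ := card_ge_two Fq
  set Q : ℝ := (Fintype.card Fq : ℝ) with hQdef
  have hlogQ : 0 < Real.log Q := Real.log_pos (by linarith)
  have hs : ∀ n : ℕ, (n : ℝ) ≤ sdeg Fq b n := by
    intro n
    have := sdeg_add_le Fq b hb 0 n
    simp only [zero_add] at this
    exact_mod_cast (Nat.le_add_left _ _).trans this
  have hval : ∀ n : ℕ, kabs Fq (polyToK Fq (qden Fq b n)) ^ ((n : ℝ)⁻¹) =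
      Q ^ ((sdeg Fq b n : ℝ) / n) := by
    intro n
    obtain ⟨g1, g2⟩ := (qSeq_degree Fq b hb n).1
    unfold qden
    rw [kabs_poly Fq g1, g2, ← Real.rpow_natCast, ← Real.rpow_mul (by linarith), div_eq_mul_inv]
  simp only [hval] at hl
  have hge : ∀ᶠ n : ℕ in atTop, Q ≤ Q ^ ((sdeg Fq b n : ℝ) / n) := by
    filter_upwards [eventually_ge_atTop 1] with n hn
    have hn' : (0 : ℝ) < n := by exact_mod_cast hn
    calc Q = Q ^ (1 : ℝ) := (Real.rpow_one _).symm
      _ ≤ _ := Real.rpow_le_rpow_of_exponent_le (by linarith) (by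
        rw [le_div_iff₀ hn', one_mul]; exact hs n)
  have hlQ : Q ≤ l := ge_of_tendsto hl hge
  have hlim : Tendsto (fun n : ℕ => (sdeg Fq b n : ℝ) / n) atTop
      (nhds (Real.log l / Real.log Q)) := by
    have h1 := ((Real.continuousAt_log (show l ≠ 0 by linarith)).tendsto.comp hl).div_const
      (Real.log Q)
    refine h1.congr fun n => ?_
    simp only [Function.comp]
    rw [Real.log_rpow (by linarith), mul_div_cancel_right₀ _ hlogQ.ne']
  set lam := Real.log l / Real.log Q with hlam
  have hlam1 : 1 ≤ lam := by
    rw [hlam, le_div_iff₀ hlogQ, one_mul]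
    exact Real.log_le_log (by linarith) hlQ
  set ε : ℝ := lam / (6 * (2 * κ + 1)) with hε
  have hk0 : (0 : ℝ) ≤ κ := Nat.cast_nonneg κ
  have hεpos : 0 < ε := by positivity
  have hεk : ε * (2 * κ + 1) = lam / 6 := by rw [hε]; field_simp
  have hε6 : ε ≤ lam / 6 := by nlinarith
  obtain ⟨N, hN⟩ := (Metric.tendsto_atTop.1 hlim) ε hεpos
  have hup : ∀ m : ℕ, N ≤ m → (sdeg Fq b m : ℝ) ≤ (lam + ε) * m := by
    intro m hm
    rcases Nat.eq_zero_or_pos m with h0 | h0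
    · simp [h0, sdeg]
    have hm' : (0 : ℝ) < m := by exact_mod_cast h0
    have := hN m hm
    rw [Real.dist_eq, abs_lt] at this
    rw [← div_le_iff₀ hm']
    linarith
  have hlow : ∀ m : ℕ, N ≤ m → (lam - ε) * m ≤ (sdeg Fq b m : ℝ) := by
    intro m hm
    rcases Nat.eq_zero_or_pos m with h0 | h0
    · simp [h0, sdeg]
    have hm' : (0 : ℝ) < m := by exact_mod_cast h0
    have := hN m hm
    rw [Real.dist_eq, abs_lt] at this
    rw [← le_div_iff₀ hm']
    linarith
  set C := sdeg Fq b N with hC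
  have hC0 : (0 : ℝ) ≤ C := Nat.cast_nonneg C
  have hup' : ∀ m : ℕ, (sdeg Fq b m : ℝ) ≤ (lam + ε) * m + C := by
    intro m
    rcases le_total N m with h | h
    · linarith [hup m h]
    · have h5 : (sdeg Fq b m : ℝ) ≤ C := by exact_mod_cast sdeg_mono Fq b h
      have : 0 ≤ (lam + ε) * m := by positivity
      linarith
  refine ⟨lam, N + 6 * C, hlam1, ?_, ?_⟩
  · intro n i hn hi
    have g1 := hlow (i + n) (by omega)
    have g2 := hup' i
    have hir : (i : ℝ) ≤ κ * n := by exact_mod_cast hi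
    have hnr : (N : ℝ) + 6 * C ≤ n := by exact_mod_cast hn
    have hN0 : (0 : ℝ) ≤ N := Nat.cast_nonneg N
    push_cast at g1
    have g3 : ε * i ≤ ε * (κ * n) := mul_le_mul_of_nonneg_left hir hεpos.le
    have g4 : ε * (2 * κ + 1) * n = lam / 6 * n := by rw [hεk]
    have g5 : (n : ℝ) ≤ lam * n := le_mul_of_one_le_left (Nat.cast_nonneg n) hlam1
    nlinarith
  · intro m hm
    refine (hup m (by omega)).trans (mul_le_mul_of_nonneg_right ?_ (Nat.cast_nonneg m))
    linarith

theorem stmt3 (Fq : Type) [Field Fq] [Fintype Fq]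
    (κ A : ℕ) (hκ : 2 ≤ κ) (hA : Fintype.card Fq ≤ A)
    (b : ℕ → Polynomial Fq)
    (hb : ∀ n : ℕ, (Fintype.card Fq : ℝ) ≤ kabs Fq (polyToK Fq (b n)) ∧
      kabs Fq (polyToK Fq (b n)) ≤ (A : ℝ))
    (n₀ : ℕ) (hn₀ : 1 ≤ n₀)
    (hcomp : ∀ n : ℕ, n₀ ≤ n → complexity b n ≤ ((κ * n : ℕ) : ℕ∞))
    (hdio : dioExp b ≠ ⊤)
    (ξ : K Fq) (hξ : IsCFOf Fq ξ (cfA Fq b)) :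
    wExp Fq 2 ξ ≤
      ((128 * (2 * κ + 1) ^ 3 *
        (Real.log A / Real.log (Fintype.card Fq)) ^ 4 : ℝ) : EReal) * dioExp b ∧
    ((∃ l : ℝ, Filter.Tendsto
        (fun n : ℕ => kabs Fq (polyToK Fq (qden Fq b n)) ^ ((n : ℝ)⁻¹))
        Filter.atTop (nhds l)) →
      wExp Fq 2 ξ ≤ ((64 * (2 * κ + 1) ^ 3 : ℝ) : EReal) * dioExp b) := by
  have hQ := card_ge_two Fq
  have hlogQ : 0 < Real.log (Fintype.card Fq : ℝ) := Real.log_pos (by linarith)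
  have hdeg : ∀ n, 1 ≤ (b n).natDegree := by
    intro n
    have := hξ.1 (n + 1) (by omega)
    rwa [cfA_succ] at this
  set r := Real.log (A : ℝ) / Real.log (Fintype.card Fq : ℝ) with hr
  have hAr : (Fintype.card Fq : ℝ) ≤ A := by exact_mod_cast hA
  have hr1 : 1 ≤ r := by
    rw [hr, le_div_iff₀ hlogQ, one_mul]
    exact Real.log_le_log (by linarith) hAr
  have hdr : ∀ n, ((b n).natDegree : ℝ) ≤ r := by
    intro n
    have hne : b n ≠ 0 := by
      intro h
      have := hdeg n
      simp [h] at this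
    have h1 := (hb n).2
    rw [kabs_poly Fq hne] at h1
    have h2 := Real.log_le_log (by positivity) h1
    rw [Real.log_pow] at h2
    rw [hr, le_div_iff₀ hlogQ]
    exact h2
  have hone := one_le_dioExp b
  obtain ⟨D, hD⟩ : ∃ D : ℝ, dioExp b = (D : EReal) := by
    refine ⟨(dioExp b).toReal, (EReal.coe_toReal hdio ?_).symm⟩
    intro h
    rw [h] at hone
    exact absurd (le_bot_iff.1 hone) (EReal.coe_ne_bot 1)
  have hD1 : 1 ≤ D := by
    rw [hD] at hone
    exact_mod_cast hone
  obtain ⟨N, hN⟩ := dio_bound b (2 * D) (by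
    rw [hD, EReal.coe_lt_coe_iff]; linarith)
  have hk2 : (2 : ℝ) ≤ κ := by exact_mod_cast hκ
  have hcube : 125 / 2 * (κ : ℝ) ≤ (2 * κ + 1) ^ 3 / 1 := by
    have : (0 : ℝ) ≤ κ := by linarith
    nlinarith [mul_nonneg this this, mul_nonneg this (sub_nonneg.2 hk2),
      mul_nonneg (mul_nonneg this this) (sub_nonneg.2 hk2)]
  have hcube' : 25 * (κ : ℝ) ≤ (2 * κ + 1) ^ 3 := by linarith
  rw [hD, ← EReal.coe_mul, ← EReal.coe_mul]
  constructor
  · refine w_bound Fq b ξ hξ hdeg κ hκ 1 r (2 * D) (max N n₀) one_pos hr1 (by linarith)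
      ?_ ?_ ?_ ?_ _ ?_
    · intro n i _ _
      have h1 : ((sdeg Fq b i + n : ℕ) : ℝ) ≤ sdeg Fq b (i + n) := by
        exact_mod_cast sdeg_add_le Fq b hdeg i n
      push_cast at h1
      linarith
    · exact fun m _ => sdeg_le Fq b r hdr m
    · exact fun i j l hij hl hw => hN i j l hij ((le_max_left _ _).trans hl) hw
    · exact fun n hn => pigeon b κ n (hcomp n ((le_max_right _ _).trans hn))
    · rw [div_one]
      have h1 : r ^ 2 ≤ r ^ 4 := pow_le_pow_right₀ hr1 (by norm_num)
      have h2 : (κ : ℝ) * r ^ 2 ≤ (2 * κ + 1) ^ 3 * r ^ 4 :=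
        mul_le_mul (by linarith) h1 (by positivity) (by positivity)
      have h3 := mul_le_mul_of_nonneg_right h2 (show 0 ≤ D by linarith)
      have h4 : 0 ≤ (κ : ℝ) * r ^ 2 * D := by positivity
      nlinarith
  · rintro ⟨l, hl⟩
    obtain ⟨lam, N', hlam, g1, g2⟩ := limit_bounds Fq b hdeg κ l hl
    refine w_bound Fq b ξ hξ hdeg κ hκ (2 / 3 * lam) (4 / 3 * lam) (2 * D) (max N' (max N n₀))
      (by linarith) (by linarith) (by linarith) ?_ ?_ ?_ ?_ _ ?_
    · exact fun n i hn hi => g1 n i ((le_max_left _ _).trans hn) hi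
    · exact fun m hm => g2 m ((le_max_left _ _).trans hm)
    · exact fun i j l hij hl hw => hN i j l hij
        (((le_max_left _ _).trans (le_max_right _ _)).trans hl) hw
    · exact fun n hn => pigeon b κ n (hcomp n
        (((le_max_right _ _).trans (le_max_right _ _)).trans hn))
    · have h0 : 4 / 3 * lam / (2 / 3 * lam) = 2 := by
        have : lam ≠ 0 := by linarith
        field_simp
        norm_num
      rw [h0]
      have h3 := mul_le_mul_of_nonneg_right hcube' (show 0 ≤ D by linarith)
      have h4 : 0 ≤ (κ : ℝ) * D := by positivity
      nlinarith

end Ooto
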